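/- The pair (X°,ξ°) is mass-stationary under P° if and only if the pair (X°, ξ°⊗λ₁) is mass-stationary under P°, where ξ°⊗λ₁ is regarded as a random measure on ℝ^{d+1} and the ℝ^{d+1}-shifts act on E through the first d coordinates: θ_{(t_1,…,t_{d+1})}x := θ_{(t_1,…,t_d)}x. -/

import Mathlib

open MeasureTheory ENNReal Set

namespace LT

/-- Points of `ℝ^d`. -/
abbrev Rd (d : ℕ) := Fin d → ℝ

/-- Points of `ℤ^d`. -/
abbrev ZZd (d : ℕ) := Fin d → ℤ

/-- The shift `θ_t ξ`, satisfying `θ_t ξ (B) = ξ (B + t)`. -/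
noncomputable def shiftM {d : ℕ} (t : Rd d) (ξ : Measure (Rd d)) : Measure (Rd d) :=
  Measure.map (fun x => x - t) ξ

/-- A (jointly) measurable action of the additive group `ℝ^d` on a measurable space `E`,
written `θ_t x = act t x`. -/
structure Action (d : ℕ) (E : Type*) [MeasurableSpace E] where
  act : Rd d → E → E
  measurable_act : ∀ t, Measurable (act t)
  act_zero : ∀ x, act 0 x = x
  act_add : ∀ s t x, act s (act t x) = act (s + t) x

/-- The conditional (normalized) measure `ξ(· | A)`. -/
noncomputable def condM {d : ℕ} (ξ : Measure (Rd d)) (A : Set (Rd d)) : Measure (Rd d) :=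
  (ξ A)⁻¹ • ξ.restrict A

/-- `0` lies in the support of `ξ`. -/
def zeroInSupport {d : ℕ} (ξ : Measure (Rd d)) : Prop :=
  ∀ U : Set (Rd d), IsOpen U → (0 : Rd d) ∈ U → 0 < ξ U

variable {d : ℕ} {Ω E : Type*} [MeasurableSpace Ω] [MeasurableSpace E]

/-- The defining identity (1) of mass-stationarity for a fixed set `C` :
`(θ_{V_C}(X,ξ), V_C + U_C) =_D ((X,ξ), U_C)`, where the conditional distribution of `U_C`
given `(X,ξ)` is uniform on `C` and that of `V_C` given `((X,ξ),U_C)` is `ξ(· | C - U_C)`. -/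
def MSIdentity (Θ : Action d E) (P : Measure Ω) (X : Ω → E) (ξ : Ω → Measure (Rd d))
    (C : Set (Rd d)) : Prop :=
  ∀ f : (E × Measure (Rd d)) × Rd d → ℝ≥0∞, Measurable f →
    ∫⁻ ω, (volume C)⁻¹ * ∫⁻ u in C,
        ∫⁻ v, f ((Θ.act v (X ω), shiftM v (ξ ω)), v + u)
          ∂(condM (ξ ω) ((· + u) ⁻¹' C)) ∂volume ∂P
    = ∫⁻ ω, (volume C)⁻¹ * ∫⁻ u in C, f ((X ω, ξ ω), u) ∂volume ∂P

/-- Mass-stationarity of `(X, ξ)` under `P`. -/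
def IsMassStationary (Θ : Action d E) (P : Measure Ω) (X : Ω → E)
    (ξ : Ω → Measure (Rd d)) : Prop :=
  ∀ C : Set (Rd d), MeasurableSet C → Bornology.IsBounded C → 0 < volume C →
    volume (frontier C) = 0 → MSIdentity Θ P X ξ C

/-- Stationarity of the pair `(X, ξ)` under `P`. -/
def IsStationary (Θ : Action d E) (P : Measure Ω) (X : Ω → E)
    (ξ : Ω → Measure (Rd d)) : Prop :=
  ∀ t : Rd d, Measure.map (fun ω => (Θ.act t (X ω), shiftM t (ξ ω))) P
    = Measure.map (fun ω => (X ω, ξ ω)) P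

/-- Stationarity of a random element `X` under `P`. -/
def IsStationaryElem (Θ : Action d E) (P : Measure Ω) (X : Ω → E) : Prop :=
  ∀ t : Rd d, Measure.map (fun ω => Θ.act t (X ω)) P = Measure.map X P

/-- `(Xc, ξc)` under `Pc` is the Palm version of the (stationary) pair `(X, ξ)` under `P`. -/
def IsPalmVersion {Ω' : Type*} [MeasurableSpace Ω']
    (Θ : Action d E) (Pc : Measure Ω) (Xc : Ω → E) (ξc : Ω → Measure (Rd d))
    (P : Measure Ω') (X : Ω' → E) (ξ : Ω' → Measure (Rd d)) : Prop :=
  ∀ f : E × Measure (Rd d) → ℝ≥0∞, Measurable f →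
    ∀ B : Set (Rd d), MeasurableSet B → 0 < volume B → volume B < ⊤ →
      ∫⁻ ω, f (Xc ω, ξc ω) ∂Pc
        = (volume B)⁻¹ * ∫⁻ ω, ∫⁻ t in B, f (Θ.act t (X ω), shiftM t (ξ ω)) ∂(ξ ω) ∂P

end LT
namespace LT

/-- The extension `ξ ⊗ λ₁` of a measure on `ℝ^d` to a measure on `ℝ^{d+1}`. -/
noncomputable def extendM {d : ℕ} (ξm : Measure (Rd d)) : Measure (Rd (d + 1)) :=
  Measure.map (fun p : Rd d × ℝ => Fin.snoc p.1 p.2) (ξm.prod volume)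

/-- Extension of an `ℝ^d`-action on `E` to an `ℝ^{d+1}`-action through the first `d`
coordinates: `θ_{(t₁,…,t_{d+1})} x = θ_{(t₁,…,t_d)} x`. -/
noncomputable def extAction {d : ℕ} {E : Type*} [MeasurableSpace E] (Θ : Action d E) :
    Action (d + 1) E where
  act t x := Θ.act (fun k => t k.castSucc) x
  measurable_act t := Θ.measurable_act _
  act_zero x := by
    show Θ.act (fun k : Fin d => (0 : Rd (d + 1)) k.castSucc) x = x
    have h : (fun k : Fin d => (0 : Rd (d + 1)) k.castSucc) = (0 : Rd d) := rfl
    rw [h, Θ.act_zero]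
  act_add s t x := by
    show Θ.act _ (Θ.act _ x) = Θ.act _ x
    rw [Θ.act_add]
    congr 1

end LT
namespace LT

/-! Mass-stationarity is equivalent to the Mecke equation
`∫∫ g(θ_v(X, ξ), -v) ξ(dv) dP = ∫∫ g((X, ξ), v) ξ(dv) dP`. Multiplying the identity for a window
`C` by the mass `ξ(C - u)`, and using Fubini's theorem, turns it into the Mecke equation for
test functions that only see the displacements `v` joining two points of `C`. Such functions
suffice: after adding a base point `w` with distribution `λ`, the law of a displacement `v`
becomes the law of the pair `(w, w + v)`, and the rectangles `A × C` with `A ⊆ C` and `C` a window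
form a `π`-system generating the Borel sets of pairs. The Mecke equation passes from `ξ` to `ξ ⊗ λ₁`
by integrating out the last coordinate, and back by testing on functions supported in a slab of
height one. -/

open ProbabilityTheory Metric TopologicalSpace

section Kernels

variable {α β : Type*} [MeasurableSpace α] [MeasurableSpace β]

lemma isSFiniteKernel_of_isFiniteMeasure (κ : Kernel α β) [∀ a, IsFiniteMeasure (κ a)] :
    IsSFiniteKernel κ := by
  classical
  let A (k : ℕ) : Set α := {a | ⌊(κ a univ).toReal⌋₊ = k}
  have hA (k : ℕ) : MeasurableSet (A k) :=
    (Nat.measurable_floor.comp (κ.measurable_coe .univ).ennreal_toReal) (measurableSet_singleton k)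
  let κ' (k : ℕ) : Kernel α β := Kernel.piecewise (hA k) κ 0
  have hfin (k : ℕ) : IsFiniteKernel (κ' k) := by
    refine ⟨⟨ENNReal.ofReal (k + 1), ofReal_lt_top, fun a ↦ ?_⟩⟩
    by_cases ha : a ∈ A k
    · rw [Kernel.piecewise_apply, if_pos ha, ← ofReal_toReal (measure_ne_top (κ a) univ)]
      refine ofReal_le_ofReal ((Nat.lt_floor_add_one _).le.trans_eq ?_)
      rw [show ⌊(κ a univ).toReal⌋₊ = k from ha]
    · simp [κ', Kernel.piecewise_apply, ha]
  have hsum : κ = Kernel.sum κ' := by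
    ext a s hs
    rw [Kernel.sum_apply' _ _ hs, tsum_eq_single ⌊(κ a univ).toReal⌋₊]
    · simp [κ', A, Kernel.piecewise_apply]
    · intro k hk
      simp [κ', A, Kernel.piecewise_apply, hk.symm]
  rw [hsum]
  infer_instance

lemma isSFiniteKernel_of_isLocallyFiniteMeasure [TopologicalSpace β] [T2Space β]
    [SigmaCompactSpace β] [OpensMeasurableSpace β] (κ : Kernel α β)
    [∀ a, IsLocallyFiniteMeasure (κ a)] : IsSFiniteKernel κ := by
  let K (n : ℕ) : Set β := disjointed (compactCovering β) n
  have hK (n : ℕ) : MeasurableSet (K n) :=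
    .disjointed (fun n ↦ (isCompact_compactCovering β n).measurableSet) n
  have hsum : κ = Kernel.sum fun n ↦ κ.restrict (hK n) := by
    ext1 a
    simp_rw [Kernel.sum_apply, Kernel.restrict_apply]
    rw [← Measure.restrict_iUnion (disjoint_disjointed _) hK, iUnion_disjointed,
      iUnion_compactCovering, Measure.restrict_univ]
  have (n : ℕ) : IsSFiniteKernel (κ.restrict (hK n)) := by
    have (a : α) : IsFiniteMeasure (κ.restrict (hK n) a) := by
      rw [Kernel.restrict_apply]
      refine ⟨?_⟩
      rw [Measure.restrict_apply_univ]
      exact (measure_mono (disjointed_subset _ n)).trans_lt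
        (isCompact_compactCovering β n).measure_lt_top
    exact isSFiniteKernel_of_isFiniteMeasure _
  rw [hsum]
  exact Kernel.isSFiniteKernel_sum

end Kernels

section LocallyFinitePart

variable {α : Type*} [MeasurableSpace α] [TopologicalSpace α] [T2Space α] [SigmaCompactSpace α]
  [WeaklyLocallyCompactSpace α] [OpensMeasurableSpace α]

lemma measurableSet_isLocallyFiniteMeasure :
    MeasurableSet {μ : Measure α | IsLocallyFiniteMeasure μ} := by
  let K := CompactExhaustion.choice α
  have heq : {μ : Measure α | IsLocallyFiniteMeasure μ} = ⋂ n, {μ | μ (K n) < ⊤} := by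
    ext μ
    refine ⟨fun (_ : IsLocallyFiniteMeasure μ) ↦
      mem_iInter.2 fun n ↦ (K.isCompact n).measure_lt_top, fun h ↦ ⟨fun x ↦ ?_⟩⟩
    obtain ⟨n, hn⟩ := K.exists_mem_nhds x
    exact ⟨K n, hn, mem_iInter.1 h n⟩
  rw [heq]
  exact .iInter fun n ↦
    Measure.measurable_coe (K.isCompact n).measurableSet measurableSet_Iio

open Classical in
/-- The kernel sending a locally finite measure to itself and every other measure to `0`.
The map `(μ, u) ↦ μ (C - u)` is jointly measurable only once the measures that are not locally
finite have been discarded, which this kernel does. -/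
noncomputable def locallyFinitePart : Kernel (Measure α) α :=
  Kernel.piecewise measurableSet_isLocallyFiniteMeasure ⟨id, measurable_id⟩ 0

lemma locallyFinitePart_apply (μ : Measure α) [h : IsLocallyFiniteMeasure μ] :
    locallyFinitePart μ = μ := by
  classical
  exact (Kernel.piecewise_apply ..).trans (if_pos h)

instance (μ : Measure α) : IsLocallyFiniteMeasure (locallyFinitePart μ) := by
  classical
  by_cases h : IsLocallyFiniteMeasure μ
  · rwa [locallyFinitePart_apply]
  · rw [show locallyFinitePart μ = 0 from (Kernel.piecewise_apply ..).trans (if_neg h)]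
    infer_instance

instance : IsSFiniteKernel (locallyFinitePart (α := α)) :=
  isSFiniteKernel_of_isLocallyFiniteMeasure _

end LocallyFinitePart

section Windows

variable {α : Type*} [PseudoMetricSpace α]

lemma iUnion_ball_inter_prod (x : α) (A D : Set α) :
    ⋃ n : ℕ, (ball x n ∩ A) ×ˢ (ball x n ∩ D) = A ×ˢ D := by
  simp_rw [← prod_inter_prod, ball_prod_same, ← iUnion_inter, iUnion_ball_nat, univ_inter]

variable [MeasurableSpace α]

/-- The sets `C` over which the identity defining mass-stationarity ranges; unlike there,
`λ C = 0` is allowed, so that windows are closed under intersection. -/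
structure IsWindow (μ : Measure α) (C : Set α) : Prop where
  measurableSet : MeasurableSet C
  isBounded : Bornology.IsBounded C
  measure_frontier : μ (frontier C) = 0

variable {μ : Measure α} {A B C : Set α}

lemma IsWindow.inter_of_null_frontier (hC : IsWindow μ C) (hB : MeasurableSet B)
    (hB₀ : μ (frontier B) = 0) : IsWindow μ (C ∩ B) where
  measurableSet := hC.measurableSet.inter hB
  isBounded := hC.isBounded.subset inter_subset_left
  measure_frontier := null_frontier_inter hC.measure_frontier hB₀

lemma IsWindow.inter (hB : IsWindow μ B) (hC : IsWindow μ C) : IsWindow μ (B ∩ C) :=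
  hB.inter_of_null_frontier hC.measurableSet hC.measure_frontier

lemma IsWindow.diff (hC : IsWindow μ C) (hB : IsWindow μ B) : IsWindow μ (C \ B) :=
  hC.inter_of_null_frontier hB.measurableSet.compl
    ((congrArg μ (frontier_compl B)).trans hB.measure_frontier)

/-- The products `A × C` with `A` a measurable subset of the window `C`. -/
def windowRectangles (μ : Measure α) : Set (Set (α × α)) :=
  {s | ∃ A C, MeasurableSet A ∧ IsWindow μ C ∧ A ⊆ C ∧ s = A ×ˢ C}

lemma isPiSystem_windowRectangles (μ : Measure α) : IsPiSystem (windowRectangles μ) := by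
  rintro _ ⟨A, C, hA, hC, hAC, rfl⟩ _ ⟨A', C', hA', hC', hAC', rfl⟩ -
  exact ⟨A ∩ A', C ∩ C', hA.inter hA', hC.inter hC', inter_subset_inter hAC hAC', prod_inter_prod⟩

variable {V : Type*} [NormedAddCommGroup V] [NormedSpace ℝ V] [FiniteDimensional ℝ V]
  [MeasurableSpace V] [BorelSpace V]

lemma isWindow_ball (μ : Measure V) [μ.IsAddHaarMeasure] (x : V) (r : ℝ) : IsWindow μ (ball x r) :=
  ⟨measurableSet_ball, isBounded_ball, (convex_ball x r).addHaar_frontier μ⟩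

lemma generateFrom_isWindow (μ : Measure V) [μ.IsAddHaarMeasure] :
    MeasurableSpace.generateFrom {C | IsWindow μ C} = ‹MeasurableSpace V› := by
  refine le_antisymm (MeasurableSpace.generateFrom_le fun C hC ↦ hC.measurableSet) ?_
  have := FiniteDimensional.proper_real V
  have hbasis : IsTopologicalBasis {B : Set V | ∃ x r, B = ball x r} := by
    refine isTopologicalBasis_of_isOpen_of_nhds ?_ fun x U hx hU ↦ ?_
    · rintro _ ⟨x, r, rfl⟩
      exact isOpen_ball
    · obtain ⟨r, hr, hsub⟩ := Metric.isOpen_iff.1 hU x hx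
      exact ⟨ball x r, ⟨x, r, rfl⟩, mem_ball_self hr, hsub⟩
  refine (BorelSpace.measurable_eq.trans hbasis.borel_eq_generateFrom).trans_le
    (MeasurableSpace.generateFrom_mono ?_)
  rintro _ ⟨x, r, rfl⟩
  exact isWindow_ball μ x r

lemma isCountablySpanning_windowRectangles (μ : Measure V) [μ.IsAddHaarMeasure] :
    IsCountablySpanning (windowRectangles μ) := by
  refine ⟨fun n : ℕ ↦ ball 0 n ×ˢ ball 0 n,
    fun n ↦ ⟨_, _, measurableSet_ball, isWindow_ball μ 0 n, subset_rfl, rfl⟩, ?_⟩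
  simp_rw [ball_prod_same]
  exact iUnion_ball_nat _

lemma generateFrom_windowRectangles (μ : Measure V) [μ.IsAddHaarMeasure] :
    MeasurableSpace.generateFrom (windowRectangles μ) = Prod.instMeasurableSpace := by
  let G := MeasurableSpace.generateFrom (windowRectangles μ)
  have hrect {A C : Set V} (hA : MeasurableSet A) (hC : IsWindow μ C) (hAC : A ⊆ C) :
      MeasurableSet[G] (A ×ˢ C) :=
    MeasurableSpace.measurableSet_generateFrom ⟨A, C, hA, hC, hAC, rfl⟩
  have hfst {A : Set V} (hA : MeasurableSet A) : MeasurableSet[G] (A ×ˢ univ) := by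
    rw [← iUnion_ball_inter_prod 0]
    simp_rw [inter_univ]
    exact .iUnion fun n ↦
      hrect (measurableSet_ball.inter hA) (isWindow_ball μ 0 n) inter_subset_left
  have hdiag {B : Set V} (hB : IsWindow μ B) : MeasurableSet[G] (Bᶜ ×ˢ Bᶜ) := by
    rw [← iUnion_ball_inter_prod 0]
    exact .iUnion fun n ↦ hrect (measurableSet_ball.diff hB.measurableSet)
      ((isWindow_ball μ 0 n).diff hB) subset_rfl
  have hsnd {B : Set V} (hB : IsWindow μ B) : MeasurableSet[G] (univ ×ˢ B) := by
    have : univ ×ˢ B = B ×ˢ B ∪ (Bᶜ ×ˢ univ) \ (Bᶜ ×ˢ Bᶜ) := by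
      ext ⟨x, y⟩
      by_cases hx : x ∈ B <;> simp [hx]
    rw [this]
    exact (hrect hB.measurableSet hB subset_rfl).union
      ((hfst hB.measurableSet.compl).diff (hdiag hB))
  refine le_antisymm ?_ (sup_le ?_ ?_)
  · refine MeasurableSpace.generateFrom_le ?_
    rintro _ ⟨A, C, hA, hC, -, rfl⟩
    exact hA.prod hC.measurableSet
  · rintro _ ⟨A, hA, rfl⟩
    simpa only [prod_univ] using hfst hA
  · refine MeasurableSpace.comap_le_iff_le_map.2 ((generateFrom_isWindow μ).ge.trans ?_)
    refine MeasurableSpace.generateFrom_le fun B hB ↦ ?_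
    exact MeasurableSpace.map_def.2 (univ_prod (t := B) ▸ hsnd hB)

end Windows

section Shear

variable {Y V : Type*} [MeasurableSpace Y] [AddCommGroup V] [MeasurableSpace V]
  [MeasurableAdd₂ V] [MeasurableSub₂ V]

/-- The shear `((y, t), w) ↦ (y, (w, w + t))`, which replaces a displacement `t` and a base point
`w` by the two end points of the displacement. -/
def shear : (Y × V) × V ≃ᵐ Y × V × V where
  toFun q := (q.1.1, q.2, q.2 + q.1.2)
  invFun p := ((p.1, p.2.2 - p.2.1), p.2.1)
  left_inv q := by simp
  right_inv p := by simp
  measurable_toFun := by dsimp; fun_prop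
  measurable_invFun := by dsimp; fun_prop

lemma shear_preimage (F : Set Y) (A C : Set V) :
    shear ⁻¹' (F ×ˢ A ×ˢ C) = {q | q.1 ∈ F ×ˢ univ ∧ q.2 ∈ A ∩ (· + q.1.2) ⁻¹' C} := by
  ext q
  simp [shear]

lemma map_shear_prod_apply (ν : Measure (Y × V)) (μ : Measure V) [SFinite μ]
    {F : Set Y} {A C : Set V} (hF : MeasurableSet F) (hA : MeasurableSet A)
    (hC : MeasurableSet C) :
    (ν.prod μ).map shear (F ×ˢ A ×ˢ C)
      = ∫⁻ p in F ×ˢ univ, μ (A ∩ (· + p.2) ⁻¹' C) ∂ν := by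
  have hmeas : MeasurableSet (F ×ˢ A ×ˢ C) := hF.prod (hA.prod hC)
  rw [shear.map_apply, Measure.prod_apply (shear.measurable hmeas),
    ← lintegral_indicator (hF.prod .univ)]
  refine lintegral_congr fun p ↦ ?_
  rw [shear_preimage]
  by_cases hp : p.1 ∈ F <;> simp [preimage, hp, inter_def]

end Shear

section Uniqueness

variable {Y V : Type*} [MeasurableSpace Y] [NormedAddCommGroup V] [NormedSpace ℝ V]
  [FiniteDimensional ℝ V] [MeasurableSpace V] [BorelSpace V]

lemma map_shear_prod_prod_ball_lt_top {ν : Measure (Y × V)} (μ : Measure V)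
    [μ.IsAddHaarMeasure] {S : Set Y} (hS : MeasurableSet S) {r : ℝ}
    (h : (ν.restrict (univ ×ˢ ball 0 (r + r))).map Prod.fst S < ⊤) :
    (ν.prod μ).map shear (S ×ˢ ball 0 r ×ˢ ball 0 r) < ⊤ := by
  have hsub : shear ⁻¹' (S ×ˢ ball (0 : V) r ×ˢ ball 0 r)
      ⊆ (S ×ˢ ball 0 (r + r)) ×ˢ ball 0 r := by
    rintro ⟨⟨y, t⟩, w⟩ ⟨hy, hw, hwt⟩
    refine ⟨⟨hy, ?_⟩, hw⟩
    simpa [shear] using (norm_sub_le (w + t) w).trans_lt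
      (add_lt_add (mem_ball_zero_iff.1 hwt) (mem_ball_zero_iff.1 hw))
  rw [Measure.map_apply measurable_fst hS, Measure.restrict_apply (measurable_fst hS), ← prod_univ,
    prod_inter_prod, inter_univ, univ_inter] at h
  rw [shear.map_apply]
  refine (measure_mono hsub).trans_lt ?_
  rw [Measure.prod_prod]
  exact mul_lt_top h measure_ball_lt_top

lemma map_shear_prod_ext {ν ρ : Measure (Y × V)}
    (hν : ∀ n : ℕ, SigmaFinite ((ν.restrict (univ ×ˢ ball 0 n)).map Prod.fst))
    (μ : Measure V) [μ.IsAddHaarMeasure]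
    (h : ∀ F A C, MeasurableSet F → MeasurableSet A → IsWindow μ C → A ⊆ C →
      (ν.prod μ).map shear (F ×ˢ A ×ˢ C) = (ρ.prod μ).map shear (F ×ˢ A ×ˢ C)) :
    (ν.prod μ).map shear = (ρ.prod μ).map shear := by
  let marginal (n : ℕ) : Measure Y := (ν.restrict (univ ×ˢ ball 0 (n + n))).map Prod.fst
  have (n : ℕ) : SigmaFinite (marginal n) := by
    simpa only [marginal, Nat.cast_add] using hν (n + n)
  let S (n k : ℕ) : Set Y := spanningSets (marginal n) k
  have hS (n k : ℕ) : MeasurableSet (S n k) := measurableSet_spanningSets _ k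
  refine Measure.ext_of_generateFrom_of_cover_subset
    (S := image2 (· ×ˢ ·) {F | MeasurableSet F} (windowRectangles μ))
    (T := range fun p : ℕ × ℕ ↦ S p.1 p.2 ×ˢ ball 0 (p.1 : ℝ) ×ˢ ball 0 (p.1 : ℝ))
    ?_ ?_ ?_ (countable_range _) ?_ ?_ ?_
  · exact (generateFrom_eq_prod MeasurableSpace.generateFrom_measurableSet
      (generateFrom_windowRectangles μ) isCountablySpanning_measurableSet
      (isCountablySpanning_windowRectangles μ)).symm
  · exact MeasurableSpace.isPiSystem_measurableSet.prod (isPiSystem_windowRectangles μ)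
  · rintro _ ⟨⟨n, k⟩, rfl⟩
    exact mem_image2_of_mem (hS n k)
      ⟨_, _, measurableSet_ball, isWindow_ball μ 0 n, subset_rfl, rfl⟩
  · refine sUnion_eq_univ_iff.2 fun ⟨y, x⟩ ↦ ?_
    obtain ⟨n, hn⟩ := mem_iUnion.1 ((iUnion_ball_nat (0 : V × V)).ge (mem_univ x))
    obtain ⟨k, hk⟩ := mem_iUnion.1 ((iUnion_spanningSets (marginal n)).ge (mem_univ y))
    exact ⟨_, ⟨(n, k), rfl⟩, hk, (ball_prod_same (0 : V) 0 n).ge hn⟩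
  · rintro _ ⟨⟨n, k⟩, rfl⟩
    exact (map_shear_prod_prod_ball_lt_top μ (hS n k)
      (measure_spanningSets_lt_top (marginal n) k)).ne
  · rintro _ ⟨F, hF, _, ⟨A, C, hA, hC, hAC, rfl⟩, rfl⟩
    exact h F A C hF hA hC hAC

/-- Both measures, displaced by an independent base point with distribution `μ`, agree on the
products `F × (A × C)` with `A ⊆ C`, and these form a `π`-system. -/
theorem ext_of_lintegral_window_overlap {ν ρ : Measure (Y × V)}
    (hν : ∀ n : ℕ, SigmaFinite ((ν.restrict (univ ×ˢ ball 0 n)).map Prod.fst))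
    (μ : Measure V) [μ.IsAddHaarMeasure]
    (h : ∀ F A C, MeasurableSet F → MeasurableSet A → IsWindow μ C → A ⊆ C →
      ∫⁻ p in F ×ˢ univ, μ (A ∩ (· + p.2) ⁻¹' C) ∂ν
        = ∫⁻ p in F ×ˢ univ, μ (A ∩ (· + p.2) ⁻¹' C) ∂ρ) :
    ν = ρ := by
  have hmap : (ν.prod μ).map shear = (ρ.prod μ).map shear :=
    map_shear_prod_ext hν μ fun F A C hF hA hC hAC ↦ by
      rw [map_shear_prod_apply ν μ hF hA hC.measurableSet,
        map_shear_prod_apply ρ μ hF hA hC.measurableSet, h F A C hF hA hC hAC]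
  ext s -
  have hball := congrArg (· (s ×ˢ ball (0 : V) 1))
    (MeasurableEquiv.map_measurableEquiv_injective shear hmap)
  simpa [Measure.prod_prod, (measure_ball_pos μ (0 : V) one_pos).ne', measure_ball_lt_top.ne,
    ENNReal.mul_left_inj] using hball

end Uniqueness

section Overlap

variable {Y V : Type*} [AddCommGroup V] [MeasurableSpace V] {C : Set V}

/-- The integral of `H (y, ·)` over the base points `w` for which both `w` and `w + t` lie in
`C`. A fixed window only reveals displacements inside it: the mass-stationarity identity for `C`
amounts to the Mecke identity for the functions of this form. -/
noncomputable def overlapIntegral (μ : Measure V) (C : Set V) (H : Y × V → ℝ≥0∞) (p : Y × V) :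
    ℝ≥0∞ :=
  ∫⁻ w in C ∩ (· + p.2) ⁻¹' C, H (p.1, w) ∂μ

lemma overlapIntegral_indicator_prod (μ : Measure V) {F : Set Y} {A : Set V}
    (hA : MeasurableSet A) (hAC : A ⊆ C) (p : Y × V) :
    overlapIntegral μ C ((F ×ˢ A).indicator 1) p
      = (F ×ˢ univ).indicator (fun p ↦ μ (A ∩ (· + p.2) ⁻¹' C)) p := by
  have hA' : C ∩ (· + p.2) ⁻¹' C ∩ A = A ∩ (· + p.2) ⁻¹' C := by
    rw [inter_right_comm, inter_eq_right.2 hAC]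
  by_cases hp : p.1 ∈ F
  · have hH (w : V) : (F ×ˢ A).indicator (1 : Y × V → ℝ≥0∞) (p.1, w) = A.indicator 1 w := by
      classical simp [indicator_apply, hp]
    simp_rw [overlapIntegral, hH]
    rw [lintegral_indicator_one hA, Measure.restrict_apply hA, inter_comm, hA']
    simp [hp]
  · simp [overlapIntegral, hp]

variable [MeasurableAdd₂ V]

lemma lintegral_lintegral_window_swap (μ ν : Measure V) [SFinite μ] [SFinite ν]
    (hC : MeasurableSet C) {k : V × V → ℝ≥0∞} (hk : Measurable k) :
    ∫⁻ u in C, ∫⁻ v in (· + u) ⁻¹' C, k (v, u) ∂μ ∂ν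
      = ∫⁻ v, ∫⁻ u in C ∩ (· + v) ⁻¹' C, k (v, u) ∂ν ∂μ := by
  let S : Set (V × V) := {q | q.2 ∈ C ∧ q.2 + q.1 ∈ C}
  have hS : MeasurableSet S := (measurable_snd hC).inter ((measurable_snd.add measurable_fst) hC)
  have hleft (u : V) : C.indicator (fun u ↦ ∫⁻ v in (· + u) ⁻¹' C, k (v, u) ∂μ) u
      = ∫⁻ v, S.indicator k (v, u) ∂μ := by
    by_cases hu : u ∈ C
    · rw [indicator_of_mem hu, ← lintegral_indicator (measurable_add_const u hC)]
      classical simp [S, indicator_apply, hu, add_comm u]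
    · simp [S, hu]
  have hright (v : V) : ∫⁻ u in C ∩ (· + v) ⁻¹' C, k (v, u) ∂ν
      = ∫⁻ u, S.indicator k (v, u) ∂ν := by
    rw [← lintegral_indicator (hC.inter (measurable_add_const v hC))]
    rfl
  rw [← lintegral_indicator hC]
  simp_rw [hleft, hright]
  exact lintegral_lintegral_swap ((hk.indicator hS).comp measurable_swap).aemeasurable

variable [MeasurableSpace Y]

lemma measurable_overlapIntegral (μ : Measure V) [SFinite μ] (hC : MeasurableSet C)
    {H : Y × V → ℝ≥0∞} (hH : Measurable H) : Measurable (overlapIntegral μ C H) := by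
  let S : Set ((Y × V) × V) := {q | q.2 ∈ C ∧ q.2 + q.1.2 ∈ C}
  have hS : MeasurableSet S :=
    (measurable_snd hC).inter ((measurable_snd.add measurable_fst.snd) hC)
  have heq (p : Y × V) : overlapIntegral μ C H p
      = ∫⁻ w, S.indicator (fun q ↦ H (q.1.1, q.2)) (p, w) ∂μ := by
    rw [overlapIntegral, ← lintegral_indicator (hC.inter (measurable_add_const p.2 hC))]
    rfl
  simp_rw [funext heq]
  exact Measurable.lintegral_prod_right'
    ((hH.comp (measurable_fst.fst.prodMk measurable_snd)).indicator hS)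

lemma setLIntegral_add_eq_overlapIntegral_neg (μ : Measure V) [μ.IsAddRightInvariant]
    (hC : MeasurableSet C) {H : Y × V → ℝ≥0∞} (hH : Measurable H) (y : Y) (v : V) :
    ∫⁻ u in C ∩ (· + v) ⁻¹' C, H (y, u + v) ∂μ = overlapIntegral μ C H (y, -v) := by
  have hS : MeasurableSet (C ∩ (· + -v) ⁻¹' C) := hC.inter (measurable_add_const (-v) hC)
  have hpre : C ∩ (· + v) ⁻¹' C = (· + v) ⁻¹' (C ∩ (· + -v) ⁻¹' C) := by
    ext u
    simp [and_comm]
  rw [hpre]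
  exact (measurePreserving_add_right μ v).setLIntegral_comp_preimage hS
    (hH.comp measurable_prodMk_left)

end Overlap

section Shift

variable {d : ℕ} {Ω E : Type*} [MeasurableSpace Ω] [MeasurableSpace E]

instance (t : Rd d) (μ : Measure (Rd d)) [IsLocallyFiniteMeasure μ] :
    IsLocallyFiniteMeasure (shiftM t μ) := by
  have : IsFiniteMeasureOnCompacts (shiftM t μ) :=
    Measure.IsFiniteMeasureOnCompacts.map μ (Homeomorph.subRight t)
  exact isLocallyFiniteMeasure_of_isFiniteMeasureOnCompacts

lemma shiftM_preimage_add (v u : Rd d) (μ : Measure (Rd d)) {C : Set (Rd d)}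
    (hC : MeasurableSet C) : shiftM v μ ((· + (v + u)) ⁻¹' C) = μ ((· + u) ⁻¹' C) := by
  rw [shiftM, Measure.map_apply (measurable_sub_const v) (measurable_add_const _ hC),
    ← preimage_comp]
  congr 2
  ext x : 1
  simp [← add_assoc]

/-- The shift `θ_t (x, η) = (θ_t x, θ_t η)` of a pair. -/
noncomputable def Action.shift (Θ : Action d E) (t : Rd d) (p : E × Measure (Rd d)) :
    E × Measure (Rd d) :=
  (Θ.act t p.1, shiftM t p.2)

/-- The standing assumptions on a random element `X` and a random measure `ξ`; joint
measurability of the action is only asked for along `X`. -/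
structure IsRandomPair (Θ : Action d E) (X : Ω → E) (ξ : Ω → Measure (Rd d)) : Prop where
  measurable_elem : Measurable X
  measurable_measure : Measurable ξ
  measurable_act : Measurable fun p : Rd d × Ω ↦ Θ.act p.1 (X p.2)
  isLocallyFiniteMeasure : ∀ ω, IsLocallyFiniteMeasure (ξ ω)

namespace IsRandomPair

variable {Θ : Action d E} {X : Ω → E} {ξ : Ω → Measure (Rd d)}

/-- The random measure `ξ`, as a kernel. -/
def kernel (h : IsRandomPair Θ X ξ) : Kernel Ω (Rd d) := ⟨ξ, h.measurable_measure⟩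

instance (h : IsRandomPair Θ X ξ) : IsSFiniteKernel h.kernel := by
  have (ω : Ω) : IsLocallyFiniteMeasure (h.kernel ω) := h.isLocallyFiniteMeasure ω
  exact isSFiniteKernel_of_isLocallyFiniteMeasure h.kernel

lemma measurable_pair (h : IsRandomPair Θ X ξ) : Measurable fun ω ↦ (X ω, ξ ω) :=
  h.measurable_elem.prodMk h.measurable_measure

lemma measurable_shiftM (h : IsRandomPair Θ X ξ) :
    Measurable fun p : Rd d × Ω ↦ shiftM p.1 (ξ p.2) := by
  refine Measure.measurable_of_measurable_coe _ fun s hs ↦ ?_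
  have hset : MeasurableSet {q : (Rd d × Ω) × Rd d | q.2 - q.1.1 ∈ s} :=
    (measurable_snd.sub measurable_fst.fst) hs
  have hmeas := Kernel.measurable_kernel_prodMk_left (κ := h.kernel.prodMkLeft (Rd d)) hset
  simp_rw [shiftM, Measure.map_apply (measurable_sub_const _) hs]
  exact hmeas

lemma measurable_shift (h : IsRandomPair Θ X ξ) :
    Measurable fun p : Rd d × Ω ↦ Θ.shift p.1 (X p.2, ξ p.2) :=
  h.measurable_act.prodMk h.measurable_shiftM

lemma measurable_shift_left (h : IsRandomPair Θ X ξ) (ω : Ω) :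
    Measurable fun v ↦ Θ.shift v (X ω, ξ ω) :=
  h.measurable_shift.comp measurable_prodMk_right

lemma sigmaFinite_of_map {P : Measure Ω} (h : IsRandomPair Θ X ξ)
    (hσ : SigmaFinite (P.map fun ω ↦ (X ω, ξ ω))) : SigmaFinite P :=
  .of_map P h.measurable_pair.aemeasurable hσ

end IsRandomPair

end Shift

section WindowMass

lemma measure_preimage_add_lt_top {V : Type*} [SeminormedAddCommGroup V] [ProperSpace V]
    [MeasurableSpace V] (η : Measure V) [IsFiniteMeasureOnCompacts η] {C : Set V}
    (hC : Bornology.IsBounded C) (u : V) : η ((· + u) ⁻¹' C) < ⊤ :=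
  ((IsometryEquiv.addRight u).isometry.antilipschitz.isBounded_preimage hC).measure_lt_top

variable {d : ℕ} {E : Type*} {C : Set (Rd d)}

lemma measure_preimage_add_pos {η : Measure (Rd d)} (hη : zeroInSupport η) {u : Rd d}
    (hu : u ∈ interior C) : 0 < η ((· + u) ⁻¹' C) :=
  (hη _ (isOpen_interior.preimage (continuous_add_const u)) (by simpa using hu)).trans_le
    (measure_mono (preimage_mono interior_subset))

/-- The mass `η (C - u)` of the translated window, read off from `((x, η), u)`. -/
noncomputable def windowMass (C : Set (Rd d)) (p : (E × Measure (Rd d)) × Rd d) : ℝ≥0∞ :=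
  locallyFinitePart p.1.2 ((· + p.2) ⁻¹' C)

lemma windowMass_mk (C : Set (Rd d)) (x : E) (η : Measure (Rd d)) [IsLocallyFiniteMeasure η]
    (u : Rd d) : windowMass C ((x, η), u) = η ((· + u) ⁻¹' C) := by
  rw [windowMass, locallyFinitePart_apply]

variable [MeasurableSpace E]

lemma measurable_windowMass (hC : MeasurableSet C) :
    Measurable (windowMass C : (E × Measure (Rd d)) × Rd d → ℝ≥0∞) := by
  have hset : MeasurableSet {q : ((E × Measure (Rd d)) × Rd d) × Rd d | q.2 + q.1.2 ∈ C} :=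
    (measurable_snd.add measurable_fst.snd) hC
  exact Kernel.measurable_kernel_prodMk_left
    (κ := locallyFinitePart.comap (fun p : (E × Measure (Rd d)) × Rd d ↦ p.1.2)
      measurable_fst.snd) hset

lemma windowMass_shift {Θ : Action d E} (hC : MeasurableSet C) (x : E) (η : Measure (Rd d))
    [IsLocallyFiniteMeasure η] (v u : Rd d) :
    windowMass C (Θ.shift v (x, η), v + u) = η ((· + u) ⁻¹' C) := by
  rw [Action.shift, windowMass_mk, shiftM_preimage_add v u η hC]

end WindowMass

section Mecke

variable {d : ℕ} {Ω E : Type*} [MeasurableSpace Ω] [MeasurableSpace E]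
  {Θ : Action d E} {P : Measure Ω} {X : Ω → E} {ξ : Ω → Measure (Rd d)} {C : Set (Rd d)}

/-- The Mecke identity for the test function `g`: exchanging the origin with a point `v` of mass
turns `((X, ξ), v)` into `(θ_v (X, ξ), -v)`. -/
def MeckeIdentity (Θ : Action d E) (P : Measure Ω) (X : Ω → E) (ξ : Ω → Measure (Rd d))
    (g : (E × Measure (Rd d)) × Rd d → ℝ≥0∞) : Prop :=
  ∫⁻ ω, ∫⁻ v, g (Θ.shift v (X ω, ξ ω), -v) ∂ξ ω ∂P = ∫⁻ ω, ∫⁻ v, g ((X ω, ξ ω), v) ∂ξ ω ∂P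

lemma msIdentity_iff (hC : 0 < volume C) (hC' : volume C ≠ ⊤) :
    MSIdentity Θ P X ξ C ↔ ∀ f : (E × Measure (Rd d)) × Rd d → ℝ≥0∞, Measurable f →
      ∫⁻ ω, ∫⁻ u in C, ∫⁻ v, f (Θ.shift v (X ω, ξ ω), v + u)
          ∂condM (ξ ω) ((· + u) ⁻¹' C) ∂volume ∂P
        = ∫⁻ ω, ∫⁻ u in C, f ((X ω, ξ ω), u) ∂volume ∂P := by
  have h0 : (volume C)⁻¹ ≠ 0 := ENNReal.inv_ne_zero.2 hC'
  have htop : (volume C)⁻¹ ≠ ⊤ := ENNReal.inv_ne_top.2 hC.ne'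
  simp_rw [MSIdentity, lintegral_const_mul' _ _ htop, ENNReal.mul_right_inj h0 htop]
  rfl

namespace IsRandomPair

lemma lintegral_lintegral_shift (h : IsRandomPair Θ X ξ) (hC : MeasurableSet C)
    {H : (E × Measure (Rd d)) × Rd d → ℝ≥0∞} (hH : Measurable H) (ω : Ω) :
    ∫⁻ u in C, ∫⁻ v in (· + u) ⁻¹' C, H (Θ.shift v (X ω, ξ ω), v + u) ∂ξ ω
      = ∫⁻ v, overlapIntegral volume C H (Θ.shift v (X ω, ξ ω), -v) ∂ξ ω := by
  have := h.isLocallyFiniteMeasure ω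
  have hmeas : Measurable fun q : Rd d × Rd d ↦ H (Θ.shift q.1 (X ω, ξ ω), q.1 + q.2) :=
    hH.comp (((h.measurable_shift_left ω).comp measurable_fst).prodMk
      (measurable_fst.add measurable_snd))
  rw [lintegral_lintegral_window_swap (ξ ω) volume hC hmeas]
  refine lintegral_congr fun v ↦ ?_
  simp_rw [add_comm v]
  exact setLIntegral_add_eq_overlapIntegral_neg volume hC hH _ v

lemma lintegral_mul_measure (h : IsRandomPair Θ X ξ) (hC : MeasurableSet C)
    {H : (E × Measure (Rd d)) × Rd d → ℝ≥0∞} (hH : Measurable H) (ω : Ω) :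
    ∫⁻ u in C, H ((X ω, ξ ω), u) * ξ ω ((· + u) ⁻¹' C)
      = ∫⁻ v, overlapIntegral volume C H ((X ω, ξ ω), v) ∂ξ ω := by
  have := h.isLocallyFiniteMeasure ω
  simp_rw [← setLIntegral_const]
  exact lintegral_lintegral_window_swap (ξ ω) volume hC
    (hH.comp (measurable_const.prodMk measurable_snd))

lemma meckeIdentity_overlapIntegral_iff (h : IsRandomPair Θ X ξ) (hC : MeasurableSet C)
    {H : (E × Measure (Rd d)) × Rd d → ℝ≥0∞} (hH : Measurable H) :
    MeckeIdentity Θ P X ξ (overlapIntegral volume C H) ↔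
      ∫⁻ ω, ∫⁻ u in C, ∫⁻ v in (· + u) ⁻¹' C, H (Θ.shift v (X ω, ξ ω), v + u) ∂ξ ω ∂volume ∂P
        = ∫⁻ ω, ∫⁻ u in C, H ((X ω, ξ ω), u) * ξ ω ((· + u) ⁻¹' C)
            ∂volume ∂P := by
  simp_rw [h.lintegral_lintegral_shift hC hH, h.lintegral_mul_measure hC hH]
  rfl

lemma lintegral_condM_shift (h : IsRandomPair Θ X ξ) (hC : MeasurableSet C)
    {f : (E × Measure (Rd d)) × Rd d → ℝ≥0∞} (hf : Measurable f) (ω : Ω) (u : Rd d) :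
    ∫⁻ v, f (Θ.shift v (X ω, ξ ω), v + u) ∂condM (ξ ω) ((· + u) ⁻¹' C)
      = ∫⁻ v in (· + u) ⁻¹' C, f (Θ.shift v (X ω, ξ ω), v + u)
          * (windowMass C (Θ.shift v (X ω, ξ ω), v + u))⁻¹ ∂ξ ω := by
  have := h.isLocallyFiniteMeasure ω
  have hmeas : Measurable fun v ↦ f (Θ.shift v (X ω, ξ ω), v + u) :=
    hf.comp ((h.measurable_shift_left ω).prodMk (measurable_add_const u))
  simp_rw [windowMass_shift hC]
  rw [condM, lintegral_smul_measure, lintegral_mul_const _ hmeas, smul_eq_mul, mul_comm]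

lemma lintegral_condM_shift_mul_windowMass (h : IsRandomPair Θ X ξ) (hC : IsWindow volume C)
    {H : (E × Measure (Rd d)) × Rd d → ℝ≥0∞} (hH : Measurable H) (ω : Ω) (u : Rd d) :
    ∫⁻ v, H (Θ.shift v (X ω, ξ ω), v + u) * windowMass C (Θ.shift v (X ω, ξ ω), v + u)
        ∂condM (ξ ω) ((· + u) ⁻¹' C)
      = ∫⁻ v in (· + u) ⁻¹' C, H (Θ.shift v (X ω, ξ ω), v + u) ∂ξ ω := by
  have := h.isLocallyFiniteMeasure ω
  refine (h.lintegral_condM_shift hC.measurableSet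
    (hH.mul (measurable_windowMass hC.measurableSet)) ω u).trans ?_
  simp_rw [Pi.mul_apply, windowMass_shift hC.measurableSet]
  rcases eq_or_ne (ξ ω ((· + u) ⁻¹' C)) 0 with h0 | h0
  · rw [setLIntegral_measure_zero _ _ h0, setLIntegral_measure_zero _ _ h0]
  · simp_rw [ENNReal.mul_inv_cancel_right h0
      (measure_preimage_add_lt_top (ξ ω) hC.isBounded u).ne]

lemma meckeIdentity_overlapIntegral (h : IsRandomPair Θ X ξ) (hMS : IsMassStationary Θ P X ξ)
    (hC : IsWindow volume C) {H : (E × Measure (Rd d)) × Rd d → ℝ≥0∞} (hH : Measurable H) :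
    MeckeIdentity Θ P X ξ (overlapIntegral volume C H) := by
  rw [h.meckeIdentity_overlapIntegral_iff hC.measurableSet hH]
  rcases eq_zero_or_pos (volume C) with h0 | hpos
  · simp_rw [setLIntegral_measure_zero C _ h0]
  have hMSC := (msIdentity_iff hpos hC.isBounded.measure_lt_top.ne).1
    (hMS C hC.measurableSet hC.isBounded hpos hC.measure_frontier) _
    (hH.mul (measurable_windowMass hC.measurableSet))
  have hmass (ω : Ω) (u : Rd d) : windowMass C ((X ω, ξ ω), u) = ξ ω ((· + u) ⁻¹' C) :=
    have := h.isLocallyFiniteMeasure ω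
    windowMass_mk C (X ω) (ξ ω) u
  simp_rw [Pi.mul_apply, h.lintegral_condM_shift_mul_windowMass hC hH, hmass] at hMSC
  exact hMSC

lemma isMassStationary_of_meckeIdentity (h : IsRandomPair Θ X ξ)
    (hsupp : ∀ᵐ ω ∂P, zeroInSupport (ξ ω))
    (hM : ∀ g, Measurable g → MeckeIdentity Θ P X ξ g) : IsMassStationary Θ P X ξ := by
  intro C hC hbdd hpos hfr
  refine (msIdentity_iff hpos hbdd.measure_lt_top.ne).2 fun f hf ↦ ?_
  let H (p : (E × Measure (Rd d)) × Rd d) := f p * (windowMass C p)⁻¹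
  have hH : Measurable H := hf.mul (measurable_windowMass hC).inv
  simp_rw [h.lintegral_condM_shift hC hf]
  refine ((h.meckeIdentity_overlapIntegral_iff hC hH).1
    (hM _ (measurable_overlapIntegral volume hC hH))).trans ?_
  refine lintegral_congr_ae (hsupp.mono fun ω hω ↦ ?_)
  have := h.isLocallyFiniteMeasure ω
  have hint : ∀ᵐ u, u ∈ C → u ∈ interior C := by
    refine measure_mono_null (fun u hu ↦ ?_) hfr
    obtain ⟨huC, huI⟩ := Classical.not_imp.1 hu
    exact ⟨subset_closure huC, huI⟩
  refine setLIntegral_congr_fun_ae hC (hint.mono fun u hu huC ↦ ?_)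
  simp only [H]
  rw [windowMass_mk, ENNReal.inv_mul_cancel_right (measure_preimage_add_pos hω (hu huC)).ne'
    (measure_preimage_add_lt_top (ξ ω) hbdd u).ne]

/-- The law of `((X, ξ), v)` when `v` is chosen according to `ξ`. -/
noncomputable def massPointLaw (h : IsRandomPair Θ X ξ) (P : Measure Ω) :
    Measure ((E × Measure (Rd d)) × Rd d) :=
  (P ⊗ₘ h.kernel).map fun q ↦ ((X q.1, ξ q.1), q.2)

/-- The law of `(θ_v (X, ξ), -v)` when `v` is chosen according to `ξ`. -/
noncomputable def reversedMassPointLaw (h : IsRandomPair Θ X ξ) (P : Measure Ω) :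
    Measure ((E × Measure (Rd d)) × Rd d) :=
  (P ⊗ₘ h.kernel).map fun q ↦ (Θ.shift q.2 (X q.1, ξ q.1), -q.2)

lemma lintegral_massPointLaw (h : IsRandomPair Θ X ξ) [SFinite P]
    {g : (E × Measure (Rd d)) × Rd d → ℝ≥0∞} (hg : Measurable g) :
    ∫⁻ p, g p ∂h.massPointLaw P = ∫⁻ ω, ∫⁻ v, g ((X ω, ξ ω), v) ∂ξ ω ∂P := by
  have hmeas : Measurable fun q : Ω × Rd d ↦ ((X q.1, ξ q.1), q.2) :=
    (h.measurable_pair.comp measurable_fst).prodMk measurable_snd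
  rw [massPointLaw, lintegral_map hg hmeas]
  exact Measure.lintegral_compProd (hg.comp hmeas)

lemma lintegral_reversedMassPointLaw (h : IsRandomPair Θ X ξ) [SFinite P]
    {g : (E × Measure (Rd d)) × Rd d → ℝ≥0∞} (hg : Measurable g) :
    ∫⁻ p, g p ∂h.reversedMassPointLaw P
      = ∫⁻ ω, ∫⁻ v, g (Θ.shift v (X ω, ξ ω), -v) ∂ξ ω ∂P := by
  have hmeas : Measurable fun q : Ω × Rd d ↦ (Θ.shift q.2 (X q.1, ξ q.1), -q.2) :=
    (h.measurable_shift.comp measurable_swap).prodMk measurable_snd.neg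
  rw [reversedMassPointLaw, lintegral_map hg hmeas]
  exact Measure.lintegral_compProd (hg.comp hmeas)

lemma meckeIdentity_iff_lintegral_eq (h : IsRandomPair Θ X ξ) [SFinite P]
    {g : (E × Measure (Rd d)) × Rd d → ℝ≥0∞} (hg : Measurable g) :
    MeckeIdentity Θ P X ξ g ↔
      ∫⁻ p, g p ∂h.reversedMassPointLaw P = ∫⁻ p, g p ∂h.massPointLaw P := by
  rw [h.lintegral_massPointLaw hg, h.lintegral_reversedMassPointLaw hg]
  rfl

lemma sigmaFinite_map_fst_massPointLaw (h : IsRandomPair Θ X ξ) [SFinite P]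
    (hσ : SigmaFinite (P.map fun ω ↦ (X ω, ξ ω))) {B : Set (Rd d)} (hB : MeasurableSet B)
    (hB' : Bornology.IsBounded B) :
    SigmaFinite (((h.massPointLaw P).restrict (univ ×ˢ B)).map Prod.fst) := by
  let mass (y : E × Measure (Rd d)) : ℝ≥0∞ := locallyFinitePart y.2 B
  have hmass : Measurable mass := (locallyFinitePart.measurable_coe hB).comp measurable_snd
  have heq : ((h.massPointLaw P).restrict (univ ×ˢ B)).map Prod.fst
      = (P.map fun ω ↦ (X ω, ξ ω)).withDensity mass := by
    ext s hs
    rw [withDensity_apply _ hs, setLIntegral_map hs hmass h.measurable_pair,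
      Measure.map_apply measurable_fst hs, Measure.restrict_apply (measurable_fst hs), ← prod_univ,
      prod_inter_prod, inter_univ, univ_inter, ← lintegral_indicator_one (hs.prod hB),
      h.lintegral_massPointLaw (measurable_one.indicator (hs.prod hB)),
      ← lintegral_indicator (h.measurable_pair hs)]
    refine lintegral_congr fun ω ↦ ?_
    have := h.isLocallyFiniteMeasure ω
    by_cases hω : (X ω, ξ ω) ∈ s
    · have hind (v : Rd d) : (s ×ˢ B).indicator (1 : (E × Measure (Rd d)) × Rd d → ℝ≥0∞)
          ((X ω, ξ ω), v) = B.indicator 1 v := by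
        classical simp [indicator_apply, hω]
      simp_rw [hind]
      rw [lintegral_indicator_one hB]
      simp [mass, hω, locallyFinitePart_apply]
    · simp [hω]
  rw [heq]
  exact .withDensity_of_ne_top' fun y ↦ hB'.measure_lt_top.ne

lemma meckeIdentity_of_isMassStationary (h : IsRandomPair Θ X ξ)
    (hσ : SigmaFinite (P.map fun ω ↦ (X ω, ξ ω))) (hMS : IsMassStationary Θ P X ξ)
    {g : (E × Measure (Rd d)) × Rd d → ℝ≥0∞} (hg : Measurable g) :
    MeckeIdentity Θ P X ξ g := by
  have := h.sigmaFinite_of_map hσ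
  suffices hlaw : h.massPointLaw P = h.reversedMassPointLaw P by
    rw [h.meckeIdentity_iff_lintegral_eq hg, hlaw]
  refine ext_of_lintegral_window_overlap
    (fun n ↦ h.sigmaFinite_map_fst_massPointLaw hσ measurableSet_ball isBounded_ball) volume
    fun F A C hF hA hC hAC ↦ ?_
  have hFA : Measurable ((F ×ˢ A).indicator (1 : (E × Measure (Rd d)) × Rd d → ℝ≥0∞)) :=
    measurable_one.indicator (hF.prod hA)
  have hM := (h.meckeIdentity_iff_lintegral_eq
    (measurable_overlapIntegral volume hC.measurableSet hFA)).1
    (h.meckeIdentity_overlapIntegral hMS hC hFA)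
  simpa only [overlapIntegral_indicator_prod volume hA hAC,
    lintegral_indicator (hF.prod .univ)] using hM.symm

theorem isMassStationary_iff_meckeIdentity (h : IsRandomPair Θ X ξ)
    (hsupp : ∀ᵐ ω ∂P, zeroInSupport (ξ ω)) (hσ : SigmaFinite (P.map fun ω ↦ (X ω, ξ ω))) :
    IsMassStationary Θ P X ξ ↔ ∀ g, Measurable g → MeckeIdentity Θ P X ξ g :=
  ⟨fun hMS _ hg ↦ h.meckeIdentity_of_isMassStationary hσ hMS hg,
    h.isMassStationary_of_meckeIdentity hsupp⟩

end IsRandomPair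

end Mecke

section Extension

lemma neg_snoc {n : ℕ} {G : Type*} [AddGroup G] (v : Fin n → G) (s : G) :
    -(Fin.snoc v s : Fin (n + 1) → G) = Fin.snoc (-v) (-s) := by
  ext i
  cases i using Fin.lastCases <;> simp

lemma snoc_sub_snoc {n : ℕ} {G : Type*} [AddGroup G] (v w : Fin n → G) (s r : G) :
    (Fin.snoc v s : Fin (n + 1) → G) - Fin.snoc w r = Fin.snoc (v - w) (s - r) := by
  ext i
  cases i using Fin.lastCases <;> simp

variable {d : ℕ} {Ω E : Type*} [MeasurableSpace Ω] [MeasurableSpace E]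

/-- The identification of `ℝ^d × ℝ` with `ℝ^{d+1}` that underlies `extendM`. -/
def snocHomeomorph (d : ℕ) : Rd d × ℝ ≃ₜ Rd (d + 1) where
  toFun p := Fin.snoc p.1 p.2
  invFun x := (Fin.init x, x (Fin.last d))
  left_inv p := by simp
  right_inv x := by simp
  continuous_toFun := Continuous.finSnoc (A := fun _ ↦ ℝ) continuous_fst continuous_snd
  continuous_invFun := by fun_prop

lemma measurable_snoc : Measurable fun p : Rd d × ℝ ↦ (Fin.snoc p.1 p.2 : Rd (d + 1)) :=
  (snocHomeomorph d).measurable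

lemma measurable_init : Measurable (Fin.init : Rd (d + 1) → Rd d) :=
  measurable_fst.comp (snocHomeomorph d).symm.measurable

lemma measurable_extendM : Measurable (extendM (d := d)) := by
  refine (Measure.measurable_map _ measurable_snoc).comp ?_
  simp only [Measure.prod_def]
  exact Measure.measurable_bind' (Measurable.map_prodMk_left (ν := (volume : Measure ℝ)))

lemma lintegral_extendM (μ : Measure (Rd d)) {g : Rd (d + 1) → ℝ≥0∞} (hg : Measurable g) :
    ∫⁻ x, g x ∂extendM μ = ∫⁻ v, (∫⁻ s : ℝ, g (Fin.snoc v s)) ∂μ := by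
  rw [extendM, lintegral_map hg measurable_snoc]
  exact lintegral_prod _ (hg.comp measurable_snoc).aemeasurable

instance (μ : Measure (Rd d)) [IsLocallyFiniteMeasure μ] :
    IsLocallyFiniteMeasure (extendM μ) := by
  have : IsFiniteMeasureOnCompacts (extendM μ) :=
    Measure.IsFiniteMeasureOnCompacts.map (μ.prod volume) (snocHomeomorph d)
  exact isLocallyFiniteMeasure_of_isFiniteMeasureOnCompacts

lemma zeroInSupport_extendM {μ : Measure (Rd d)} (hμ : zeroInSupport μ) :
    zeroInSupport (extendM μ) := by
  intro U hU h0
  have hzero : snocHomeomorph d (0, 0) = 0 := by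
    ext i
    cases i using Fin.lastCases <;> simp [snocHomeomorph]
  obtain ⟨A, I, hA, hI, h0A, h0I, hAI⟩ := isOpen_prod_iff.1
    (hU.preimage (snocHomeomorph d).continuous) 0 0 (by rwa [mem_preimage, hzero])
  calc 0 < μ A * volume I := ENNReal.mul_pos (hμ A hA h0A).ne' (hI.measure_pos volume ⟨0, h0I⟩).ne'
    _ = μ.prod volume (A ×ˢ I) := (Measure.prod_prod A I).symm
    _ ≤ μ.prod volume (snocHomeomorph d ⁻¹' U) := measure_mono hAI
    _ = extendM μ U := (Measure.map_apply measurable_snoc hU.measurableSet).symm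

lemma shiftM_snoc_extendM (v : Rd d) (s : ℝ) (μ : Measure (Rd d)) [SFinite μ] :
    shiftM (Fin.snoc v s) (extendM μ) = extendM (shiftM v μ) := by
  have hs : volume.map (fun x : ℝ ↦ x - s) = volume :=
    (measurePreserving_sub_right volume s).map_eq
  have hprod : (shiftM v μ).prod volume
      = (μ.prod volume).map (Prod.map (fun x ↦ x - v) fun x ↦ x - s) := by
    rw [← Measure.map_prod_map μ volume (measurable_sub_const v) (measurable_sub_const s), hs,
      shiftM]
  rw [shiftM, extendM, extendM, hprod, Measure.map_map (measurable_sub_const _) measurable_snoc,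
    Measure.map_map measurable_snoc
      ((measurable_sub_const v).prodMap (measurable_sub_const s))]
  congr 1
  ext1 p
  exact snoc_sub_snoc p.1 v p.2 s

/-- The mass that `η` puts on `B × [0, 1]`, as a measure in `B`; a measurable left inverse of
`extendM`. -/
noncomputable def slabMarginal (η : Measure (Rd (d + 1))) : Measure (Rd d) :=
  (η.restrict {x | x (Fin.last d) ∈ Icc 0 1}).map Fin.init

lemma slabMarginal_apply (η : Measure (Rd (d + 1))) {B : Set (Rd d)} (hB : MeasurableSet B) :
    slabMarginal η B = η (Fin.init ⁻¹' B ∩ {x | x (Fin.last d) ∈ Icc 0 1}) := by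
  rw [slabMarginal, Measure.map_apply measurable_init hB,
    Measure.restrict_apply (measurable_init hB)]

lemma measurable_slabMarginal : Measurable (slabMarginal (d := d)) := by
  refine Measure.measurable_of_measurable_coe _ fun B hB ↦ ?_
  simp_rw [slabMarginal_apply _ hB]
  exact Measure.measurable_coe
    ((measurable_init hB).inter (measurable_pi_apply (Fin.last d) measurableSet_Icc))

lemma slabMarginal_extendM (μ : Measure (Rd d)) : slabMarginal (extendM μ) = μ := by
  ext B hB
  have hmeas : MeasurableSet (Fin.init ⁻¹' B ∩ {x : Rd (d + 1) | x (Fin.last d) ∈ Icc 0 1}) :=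
    (measurable_init hB).inter (measurable_pi_apply (Fin.last d) measurableSet_Icc)
  have hpre : (fun p : Rd d × ℝ ↦ (Fin.snoc p.1 p.2 : Rd (d + 1))) ⁻¹'
      (Fin.init ⁻¹' B ∩ {x | x (Fin.last d) ∈ Icc 0 1}) = B ×ˢ Icc 0 1 := by
    ext p
    simp
  rw [slabMarginal_apply _ hB, extendM, Measure.map_apply measurable_snoc hmeas, hpre,
    Measure.prod_prod, Real.volume_Icc, sub_zero, ofReal_one, mul_one]

lemma extAction_shift_snoc (Θ : Action d E) (v : Rd d) (s : ℝ) (x : E) (μ : Measure (Rd d))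
    [SFinite μ] : (extAction Θ).shift (Fin.snoc v s) (x, extendM μ)
      = Prod.map id extendM (Θ.shift v (x, μ)) := by
  simp [Action.shift, extAction, shiftM_snoc_extendM]

variable {Θ : Action d E} {P : Measure Ω} {X : Ω → E} {ξ : Ω → Measure (Rd d)}

/-- The integral of `g` over the fibre above a point of `ℝ^d`: the test function on the base which
corresponds to the test function `g` on the extension. -/
noncomputable def fiberIntegral (g : (E × Measure (Rd (d + 1))) × Rd (d + 1) → ℝ≥0∞)
    (p : (E × Measure (Rd d)) × Rd d) : ℝ≥0∞ :=
  ∫⁻ s : ℝ, g (Prod.map id extendM p.1, Fin.snoc p.2 s)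

lemma measurable_fiberIntegral {g : (E × Measure (Rd (d + 1))) × Rd (d + 1) → ℝ≥0∞}
    (hg : Measurable g) : Measurable (fiberIntegral g) := by
  refine Measurable.lintegral_prod_right'
    (f := fun q : ((E × Measure (Rd d)) × Rd d) × ℝ ↦
      g (Prod.map id extendM q.1.1, Fin.snoc q.1.2 q.2)) (hg.comp ?_)
  exact ((measurable_id.prodMap measurable_extendM).comp measurable_fst.fst).prodMk
    (measurable_snoc.comp (measurable_fst.snd.prodMk measurable_snd))

lemma exists_fiberIntegral_eq {g : (E × Measure (Rd d)) × Rd d → ℝ≥0∞} (hg : Measurable g) :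
    ∃ g' : (E × Measure (Rd (d + 1))) × Rd (d + 1) → ℝ≥0∞,
      Measurable g' ∧ fiberIntegral g' = g := by
  have hlast : Measurable fun p : (E × Measure (Rd (d + 1))) × Rd (d + 1) ↦ p.2 (Fin.last d) :=
    (measurable_pi_apply (Fin.last d)).comp measurable_snd
  have hI : Measurable ((Icc (0 : ℝ) 1).indicator (1 : ℝ → ℝ≥0∞)) :=
    measurable_one.indicator measurableSet_Icc
  refine ⟨fun p ↦ g (Prod.map id slabMarginal p.1, Fin.init p.2)
    * (Icc 0 1).indicator 1 (p.2 (Fin.last d)), ?_, funext fun p ↦ ?_⟩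
  · exact (hg.comp ((measurable_id.prodMap measurable_slabMarginal).prodMap measurable_init)).mul
      (hI.comp hlast)
  · simp_rw [fiberIntegral, Prod.map_map, Fin.init_snoc, Fin.snoc_last]
    rw [lintegral_const_mul _ hI, lintegral_indicator_one measurableSet_Icc]
    simp [Prod.map, slabMarginal_extendM]

namespace IsRandomPair

lemma extend (h : IsRandomPair Θ X ξ) :
    IsRandomPair (extAction Θ) X fun ω ↦ extendM (ξ ω) where
  measurable_elem := h.measurable_elem
  measurable_measure := measurable_extendM.comp h.measurable_measure
  measurable_act := h.measurable_act.comp (measurable_init.prodMap measurable_id)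
  isLocallyFiniteMeasure ω := by
    have := h.isLocallyFiniteMeasure ω
    infer_instance

lemma sigmaFinite_map_extend (h : IsRandomPair Θ X ξ)
    (hσ : SigmaFinite (P.map fun ω ↦ (X ω, ξ ω))) :
    SigmaFinite (P.map fun ω ↦ (X ω, extendM (ξ ω))) := by
  have hmeas : Measurable (Prod.map id slabMarginal : E × Measure (Rd (d + 1)) → _) :=
    measurable_id.prodMap measurable_slabMarginal
  refine .of_map _ hmeas.aemeasurable ?_
  rw [Measure.map_map hmeas h.extend.measurable_pair]
  simpa [Function.comp_def, slabMarginal_extendM] using hσ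

lemma meckeIdentity_extend_iff (h : IsRandomPair Θ X ξ)
    {g : (E × Measure (Rd (d + 1))) × Rd (d + 1) → ℝ≥0∞} (hg : Measurable g) :
    MeckeIdentity (extAction Θ) P X (fun ω ↦ extendM (ξ ω)) g ↔
      MeckeIdentity Θ P X ξ (fiberIntegral g) := by
  have hleft (ω : Ω) :
      ∫⁻ x, g ((extAction Θ).shift x (X ω, extendM (ξ ω)), -x) ∂extendM (ξ ω)
        = ∫⁻ v, fiberIntegral g (Θ.shift v (X ω, ξ ω), -v) ∂ξ ω := by
    have := h.isLocallyFiniteMeasure ω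
    refine (lintegral_extendM _
      (hg.comp ((h.extend.measurable_shift_left ω).prodMk measurable_neg))).trans ?_
    refine lintegral_congr fun v ↦ ?_
    simp_rw [Function.comp_apply, extAction_shift_snoc, neg_snoc, fiberIntegral]
    exact lintegral_neg_eq_self (fun s ↦ g (Prod.map id extendM (Θ.shift v (X ω, ξ ω)),
      Fin.snoc (-v) s))
  have hright (ω : Ω) : ∫⁻ x, g ((X ω, extendM (ξ ω)), x) ∂extendM (ξ ω)
      = ∫⁻ v, fiberIntegral g ((X ω, ξ ω), v) ∂ξ ω :=
    lintegral_extendM _ (hg.comp measurable_prodMk_left)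
  simp_rw [MeckeIdentity, hleft, hright]

theorem forall_meckeIdentity_extend_iff (h : IsRandomPair Θ X ξ) :
    (∀ g, Measurable g → MeckeIdentity (extAction Θ) P X (fun ω ↦ extendM (ξ ω)) g) ↔
      ∀ g, Measurable g → MeckeIdentity Θ P X ξ g := by
  refine ⟨fun hM g hg ↦ ?_, fun hM g hg ↦
    (h.meckeIdentity_extend_iff hg).2 (hM _ (measurable_fiberIntegral hg))⟩
  obtain ⟨g', hg', rfl⟩ := exists_fiberIntegral_eq hg
  exact (h.meckeIdentity_extend_iff hg').1 (hM g' hg')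

end IsRandomPair

end Extension

/-- **Proposition 1.** The pair `(X°,ξ°)` is mass-stationary under `P°` if and only if
`(X°, ξ°⊗λ₁)` is mass-stationary under `P°`, where `ξ°⊗λ₁` is regarded as a random
measure on `ℝ^{d+1}` and the `ℝ^{d+1}`-shifts act on `E` through the first `d`
coordinates. -/
theorem mass_stationary_iff_extension_mass_stationary
    {d : ℕ} {Ω E : Type*} [MeasurableSpace Ω] [MeasurableSpace E]
    (Θ : Action d E) (Pc : Measure Ω) [SigmaFinite Pc]
    (Xc : Ω → E) (ξc : Ω → Measure (Rd d))
    (hXc : Measurable Xc) (hξc : Measurable ξc)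
    (hXcshift : Measurable fun p : Rd d × Ω => Θ.act p.1 (Xc p.2))
    (hfin : ∀ ω, IsLocallyFiniteMeasure (ξc ω))
    (hsupp : ∀ᵐ ω ∂Pc, zeroInSupport (ξc ω))
    (hσ : SigmaFinite (Measure.map (fun ω => (Xc ω, ξc ω)) Pc)) :
    IsMassStationary Θ Pc Xc ξc ↔
      IsMassStationary (extAction Θ) Pc Xc (fun ω => extendM (ξc ω)) := by
  have h : IsRandomPair Θ Xc ξc := ⟨hXc, hξc, hXcshift, hfin⟩
  rw [h.isMassStationary_iff_meckeIdentity hsupp hσ,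
    h.extend.isMassStationary_iff_meckeIdentity (hsupp.mono fun _ ↦ zeroInSupport_extendM)
      (h.sigmaFinite_map_extend hσ),
    h.forall_meckeIdentity_extend_iff]

end LT
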